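/- arXiv:2512.04190 — 5 statements merged into one kernel-verified Lean document; each statement's English description precedes it below -/
import Mathlib

section
/- Let M(a,b,c,d) be the matrix of consequences described in the context, with entries in the rational numbers ℚ. Suppose v = (a,b,c,d) ∈ ℚ⁴ is a nonzero vector all of whose components lie in the set {0, 1, −1, 2, −2}, and suppose the rank of M(a,b,c,d) over ℚ is at most 35 (i.e., submaximal, the maximal possible rank being 36). Then there exist a nonzero scalar λ ∈ ℚ and a scalar t ∈ ℚ such that v = λ·u, where u is one of the following seven vectors: (1,0,0,t), (1,t,0,0), (1,−1,t,−1), (0,1,0,t), (0,1,t,0), (0,0,1,t), (0,0,0,1). -/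
/-- First components `p_i` (1-indexed columns) of the 42 quadruples. -/
def colP : Fin 42 → ℕ :=
  ![4,8,11,13,14,1,4,8,11,13,14,1,4,8,11,13,14,1,5,9,12,15,16,2,17,24,26,27,28,7,19,29,34,36,37,10,2,7,10,3,23,33]

/-- Second components `q_i`. -/
def colQ : Fin 42 → ℕ :=
  ![5,9,12,15,16,2,6,18,20,21,22,4,6,18,20,21,22,4,6,18,20,21,22,4,18,25,30,31,32,8,20,30,35,38,39,11,3,17,19,5,24,34]

/-- Third components `r_i`. -/
def colR : Fin 42 → ℕ :=
  ![21,31,38,40,41,13,17,24,26,27,28,7,18,25,30,31,32,8,18,25,30,31,32,8,20,30,35,38,39,11,21,31,38,40,41,13,15,23,29,9,26,36]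

/-- Fourth components `s_i`. -/
def colS : Fin 42 → ℕ :=
  ![22,32,39,41,42,14,22,32,39,41,42,14,19,29,34,36,37,10,20,30,35,38,39,11,21,31,38,40,41,13,22,32,39,41,42,14,16,28,33,12,27,37]

/-- The 42×42 matrix of consequences `M(a,b,c,d)` over a field `K`:
row `i` has entry `a` in column `p_i`, `b` in column `q_i`, `c` in column `r_i`,
`d` in column `s_i` (columns counted 1-based), and `0` elsewhere. -/
def consMatrix (K : Type*) [Field K] (a b c d : K) : Matrix (Fin 42) (Fin 42) K :=
  fun i j =>
    (if (j : ℕ) + 1 = colP i then a else 0) +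
    (if (j : ℕ) + 1 = colQ i then b else 0) +
    (if (j : ℕ) + 1 = colR i then c else 0) +
    (if (j : ℕ) + 1 = colS i then d else 0)

/-- Force the evaluation of a natural number (for fast kernel reduction). -/
noncomputable def frcN {α : Type} (n : ℕ) (k : ℕ → α) : α :=
  Nat.rec (k 0) (fun m _ => k (Nat.succ m)) n

/-- Force the evaluation of an integer (for fast kernel reduction). -/
noncomputable def frc {α : Type} (z : ℤ) (k : ℤ → α) : α :=
  Int.rec (fun n => frcN n fun n => k (Int.ofNat n)) (fun n => frcN n fun n => k (Int.negSucc n)) z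

/-- Zero test which reduces quickly in the kernel. -/
noncomputable def isZ (z : ℤ) : Bool := Int.rec (fun n => Nat.beq n 0) (fun _ => false) z

/-- Case distinction on a Boolean. -/
noncomputable def iteB {α : Type} (b : Bool) (x y : α) : α := Bool.rec y x b

/-- A sparse linear form: a list of (index, coefficient) pairs. -/
inductive Row where
  | nil : Row
  | cons : ℕ → ℤ → Row → Row

/-- A list of sparse linear forms. -/
inductive Sys where
  | nil : Sys
  | cons : Row → Sys → Sys

/-- Multiply a sparse linear form by a scalar. -/
noncomputable def scaleRow (B : ℤ) (e : Row) : Row :=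
  Row.rec Row.nil (fun j z _ ih => frc (Int.mul B z) fun w => Row.cons j w ih) e

/-- Merge the term `(i, A * y)` and the continuation `F` with a row. -/
noncomputable def insRow (A B : ℤ) (i : ℕ) (y : ℤ) (F : Row → Row) (e : Row) : Row :=
  Row.rec (frc (Int.mul A y) fun w => Row.cons i w (F Row.nil))
    (fun j z zs ih =>
      iteB (Nat.beq i j)
        (frc (Int.add (Int.mul A y) (Int.mul B z)) fun w =>
          iteB (isZ w) (F zs) (Row.cons i w (F zs)))
        (iteB (Nat.ble i j)
          (frc (Int.mul A y) fun w => Row.cons i w (F (Row.cons j z zs)))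
          (frc (Int.mul B z) fun w => Row.cons j w ih))) e

/-- The linear combination `A * e + B * p` of sparse rows. -/
noncomputable def comb (A B : ℤ) (e : Row) : Row → Row :=
  Row.rec (scaleRow B) (fun i y _ ih => insRow A B i y ih) e

/-- Search for an equation with leading index `j` and nonzero coefficient `p`, and continue with
`k p r` where `r` is the rest of this equation; continue with `d` if there is none. -/
noncomputable def pick {α : Type} (j : ℕ) (d : α) (k : ℤ → Row → α) (s : Sys) : α :=
  Sys.rec d (fun e _ ih =>
    Row.rec ih (fun i h t _ => iteB (Nat.beq i j) (iteB (isZ h) ih (k h t)) ih) e) s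

/-- Eliminate the index `j` in all equations, using the pivot equation with leading
coefficient `p` and tail `r`. -/
noncomputable def elimAll (j : ℕ) (p : ℤ) (r : Row) (s : Sys) : Sys :=
  Sys.rec Sys.nil (fun e _ ih =>
    Row.rec ih (fun i h t _ =>
      iteB (Nat.beq i j)
        (frc (Int.tdiv p (Int.gcd p h)) fun A =>
          frc (Int.neg (Int.tdiv h (Int.gcd p h))) fun B =>
            Sys.cons (comb A B (Row.cons i h t) (Row.cons j p r)) ih)
        (Sys.cons (Row.cons i h t) ih)) e) s

/-- All indices of the row lie in the interval `[j, m)`. -/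
noncomputable def inRange (j m : ℕ) (e : Row) : Bool :=
  Row.rec true (fun i _ _ ih => iteB (Nat.ble j i) (iteB (Nat.ble m i) false ih) false) e

/-- Gaussian elimination in the `n` unknowns with indices `j, …, m - 1`, allowing at most `k`
free unknowns. -/
noncomputable def solve (m n : ℕ) : ℕ → ℕ → Sys → Bool :=
  Nat.rec (fun j _ _ => Nat.beq j m) (fun _ ih j k eqs =>
    pick j (Nat.rec false (fun k _ => ih (Nat.succ j) k eqs) k)
      (fun p r => iteB (inRange (Nat.succ j) m r) (ih (Nat.succ j) k (elimAll j p r eqs)) false)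
      eqs) n

theorem frc_eq {α : Type} (z : ℤ) (k : ℤ → α) : frc z k = k z := by
  cases z with
  | ofNat n => cases n <;> rfl
  | negSucc n => cases n <;> rfl

theorem iteB_true {α : Type} (x y : α) : iteB true x y = x := rfl

theorem iteB_false {α : Type} (x y : α) : iteB false x y = y := rfl

theorem isZ_true {h : ℤ} (hh : isZ h = true) : h = 0 := by
  cases h with
  | ofNat n =>
    have : n = 0 := Nat.eq_of_beq_eq_true hh
    simp [this]
  | negSucc n => exact absurd hh (by simp [isZ])

theorem isZ_false {h : ℤ} (hh : isZ h = false) : h ≠ 0 := by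
  rintro rfl
  exact absurd hh (by decide)

/-- Value of a sparse linear form. -/
def dotR (x : ℕ → ℚ) : Row → ℚ
  | Row.nil => 0
  | Row.cons i z t => (z : ℚ) * x i + dotR x t

/-- The sequence `x` solves all equations. -/
def solves (x : ℕ → ℚ) : Sys → Prop
  | Sys.nil => True
  | Sys.cons e s => dotR x e = 0 ∧ solves x s

theorem dotR_scaleRow (x : ℕ → ℚ) (B : ℤ) (e : Row) : dotR x (scaleRow B e) = B * dotR x e := by
  induction e with
  | nil => simp [scaleRow, dotR]
  | cons j z t ih =>
    have : scaleRow B (Row.cons j z t)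
      = frc (Int.mul B z) fun w => Row.cons j w (scaleRow B t) := rfl
    rw [this, frc_eq, dotR, ih, dotR, show Int.mul B z = B * z from rfl]
    push_cast
    ring

theorem dotR_insRow (x : ℕ → ℚ) (A B : ℤ) (i : ℕ) (y : ℤ) (F : Row → Row) (c : ℚ)
    (hF : ∀ p, dotR x (F p) = c + B * dotR x p) (p : Row) :
    dotR x (insRow A B i y F p) = A * (y * x i) + c + B * dotR x p := by
  induction p with
  | nil =>
    have : insRow A B i y F Row.nil
      = frc (Int.mul A y) fun w => Row.cons i w (F Row.nil) := rfl
    rw [this, frc_eq, show Int.mul A y = A * y from rfl]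
    simp only [dotR, hF]
    push_cast
    ring
  | cons j z zs ih =>
    have : insRow A B i y F (Row.cons j z zs) =
      iteB (Nat.beq i j)
        (frc (Int.add (Int.mul A y) (Int.mul B z)) fun w =>
          iteB (isZ w) (F zs) (Row.cons i w (F zs)))
        (iteB (Nat.ble i j)
          (frc (Int.mul A y) fun w => Row.cons i w (F (Row.cons j z zs)))
          (frc (Int.mul B z) fun w => Row.cons j w (insRow A B i y F zs))) := rfl
    rw [this]
    simp only [frc_eq]
    rw [show Int.add (Int.mul A y) (Int.mul B z) = A * y + B * z from rfl,
      show Int.mul A y = A * y from rfl, show Int.mul B z = B * z from rfl]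
    cases h1 : Nat.beq i j with
    | true =>
      have hij : i = j := Nat.eq_of_beq_eq_true h1
      subst hij
      rw [iteB_true]
      cases h2 : isZ (A * y + B * z) with
      | true =>
        have h0 : ((A * y + B * z : ℤ) : ℚ) = 0 := by rw [isZ_true h2]; rfl
        push_cast at h0
        rw [iteB_true, hF, dotR]
        linear_combination (-x i) * h0
      | false =>
        rw [iteB_false, dotR, hF, dotR]
        push_cast
        ring
    | false =>
      rw [iteB_false]
      cases Nat.ble i j with
      | true =>
        rw [iteB_true, dotR, hF]
        push_cast
        ring
      | false =>
        rw [iteB_false, dotR, ih, dotR]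
        push_cast
        ring

theorem dotR_comb (x : ℕ → ℚ) (A B : ℤ) (e p : Row) :
    dotR x (comb A B e p) = A * dotR x e + B * dotR x p := by
  induction e generalizing p with
  | nil =>
    have : comb A B Row.nil p = scaleRow B p := rfl
    rw [this, dotR_scaleRow, dotR]
    ring
  | cons i y t ih =>
    have : comb A B (Row.cons i y t) p = insRow A B i y (comb A B t) p := rfl
    rw [this, dotR_insRow x A B i y _ _ ih, dotR]
    ring

theorem pick_spec {α : Type} (j : ℕ) (d : α) (k : ℤ → Row → α) (s : Sys) :
    pick j d k s = d ∨ ∃ p r, p ≠ 0 ∧ (∀ x, solves x s → dotR x (Row.cons j p r) = 0) ∧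
      pick j d k s = k p r := by
  induction s with
  | nil => exact Or.inl rfl
  | cons e s ih =>
    have step : pick j d k (Sys.cons e s) = pick j d k s →
        (pick j d k (Sys.cons e s) = d ∨ ∃ p r, p ≠ 0 ∧
          (∀ x, solves x (Sys.cons e s) → dotR x (Row.cons j p r) = 0) ∧
          pick j d k (Sys.cons e s) = k p r) := by
      intro h
      rw [h]
      rcases ih with ih | ⟨p, r, h1, h2, h3⟩
      · exact Or.inl ih
      · exact Or.inr ⟨p, r, h1, fun x hx => h2 x hx.2, h3⟩
    cases e with
    | nil => exact step rfl
    | cons i h t =>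
      have eq : pick j d k (Sys.cons (Row.cons i h t) s) =
        iteB (Nat.beq i j) (iteB (isZ h) (pick j d k s) (k h t)) (pick j d k s) := rfl
      cases h1 : Nat.beq i j with
      | false => exact step (by rw [eq, h1, iteB_false])
      | true =>
        cases h2 : isZ h with
        | true => exact step (by rw [eq, h1, h2, iteB_true, iteB_true])
        | false =>
          have hij : i = j := Nat.eq_of_beq_eq_true h1
          subst hij
          exact Or.inr ⟨h, t, isZ_false h2, fun x hx => hx.1,
            by rw [eq, h1, h2, iteB_true, iteB_false]⟩

theorem solves_elimAll (x : ℕ → ℚ) (j : ℕ) (p : ℤ) (r : Row) (s : Sys)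
    (hp : dotR x (Row.cons j p r) = 0) (hs : solves x s) : solves x (elimAll j p r s) := by
  induction s with
  | nil => trivial
  | cons e s ih =>
    have ih := ih hs.2
    cases e with
    | nil => exact ih
    | cons i h t =>
      have eq : elimAll j p r (Sys.cons (Row.cons i h t) s) =
        iteB (Nat.beq i j)
          (frc (Int.tdiv p (Int.gcd p h)) fun A =>
            frc (Int.neg (Int.tdiv h (Int.gcd p h))) fun B =>
              Sys.cons (comb A B (Row.cons i h t) (Row.cons j p r)) (elimAll j p r s))
          (Sys.cons (Row.cons i h t) (elimAll j p r s)) := rfl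
      rw [eq]
      simp only [frc_eq]
      cases Nat.beq i j with
      | false => exact ⟨hs.1, ih⟩
      | true =>
        rw [iteB_true]
        refine ⟨?_, ih⟩
        rw [dotR_comb, hp, hs.1]
        ring

theorem dotR_inRange (x : ℕ → ℚ) (j m : ℕ) (e : Row) (he : inRange j m e = true)
    (hx : ∀ i, j ≤ i → i < m → x i = 0) : dotR x e = 0 := by
  induction e with
  | nil => rfl
  | cons i z t ih =>
    have eq : inRange j m (Row.cons i z t) =
      iteB (Nat.ble j i) (iteB (Nat.ble m i) false (inRange j m t)) false := rfl
    rw [eq] at he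
    cases h1 : Nat.ble j i with
    | false => rw [h1, iteB_false] at he; cases he
    | true =>
      cases h2 : Nat.ble m i with
      | true => rw [h1, h2, iteB_true, iteB_true] at he; cases he
      | false =>
        rw [h1, h2, iteB_true, iteB_false] at he
        have hji : j ≤ i := Nat.le_of_ble_eq_true h1
        have him : i < m := by
          by_contra hcon
          have := Nat.ble_eq_true_of_le (not_lt.1 hcon)
          rw [h2] at this
          cases this
        rw [dotR, ih he, hx i hji him]
        ring

/-- Soundness of the elimination: a solution vanishing on a suitable set of at most `k`
coordinates vanishes identically. -/
theorem solve_sound (m n j k : ℕ) (s : Sys) (h : solve m n j k s = true) :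
    ∃ F : Finset ℕ, F.card ≤ k ∧ ∀ x : ℕ → ℚ, solves x s →
      (∀ i ∈ F, x i = 0) → ∀ i, j ≤ i → i < m → x i = 0 := by
  induction n generalizing j k s with
  | zero =>
    have hj : j = m := Nat.eq_of_beq_eq_true h
    exact ⟨∅, by simp, by intros; omega⟩
  | succ n ih =>
    have eq : solve m (n + 1) j k s =
      pick j (Nat.rec false (fun k _ => solve m n (Nat.succ j) k s) k)
        (fun p r => iteB (inRange (Nat.succ j) m r)
          (solve m n (Nat.succ j) k (elimAll j p r s)) false) s := rfl
    rw [eq] at h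
    rcases pick_spec j (Nat.rec false (fun k _ => solve m n (Nat.succ j) k s) k)
        (fun p r => iteB (inRange (Nat.succ j) m r)
          (solve m n (Nat.succ j) k (elimAll j p r s)) false) s with h' | ⟨p, r, hp0, hp, h'⟩
    · rw [h'] at h
      cases k with
      | zero => cases h
      | succ k =>
        obtain ⟨F, hF, H⟩ := ih (j + 1) k s h
        refine ⟨insert j F, (Finset.card_insert_le _ _).trans (by omega), ?_⟩
        intro x hx hxF i hi him
        rcases Nat.eq_or_lt_of_le hi with rfl | hi
        · exact hxF _ (Finset.mem_insert_self _ _)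
        · exact H x hx (fun i hi => hxF i (Finset.mem_insert_of_mem hi)) i hi him
    · rw [h'] at h
      cases hr : inRange (Nat.succ j) m r with
      | false => rw [hr, iteB_false] at h; cases h
      | true =>
        rw [hr, iteB_true] at h
        obtain ⟨F, hF, H⟩ := ih (j + 1) k _ h
        refine ⟨F, hF, ?_⟩
        intro x hx hxF i hi him
        have hpx := hp x hx
        have key := H x (solves_elimAll x j p r s hpx hx) hxF
        rcases Nat.eq_or_lt_of_le hi with rfl | hi
        · rw [dotR, dotR_inRange x _ m r hr key] at hpx
          simpa [hp0] using hpx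
        · exact key i hi him

/-- The 42 quadruples. -/
def quads : List (ℕ × ℕ × ℕ × ℕ) :=
  [(4, 5, 21, 22), (8, 9, 31, 32), (11, 12, 38, 39), (13, 15, 40, 41), (14, 16, 41, 42), (1, 2,
   13, 14), (4, 6, 17, 22), (8, 18, 24, 32), (11, 20, 26, 39), (13, 21, 27, 41), (14, 22, 28,
   42), (1, 4, 7, 14), (4, 6, 18, 19), (8, 18, 25, 29), (11, 20, 30, 34), (13, 21, 31, 36), (14,
   22, 32, 37), (1, 4, 8, 10), (5, 6, 18, 20), (9, 18, 25, 30), (12, 20, 30, 35), (15, 21, 31,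
   38), (16, 22, 32, 39), (2, 4, 8, 11), (17, 18, 20, 21), (24, 25, 30, 31), (26, 30, 35, 38),
   (27, 31, 38, 40), (28, 32, 39, 41), (7, 8, 11, 13), (19, 20, 21, 22), (29, 30, 31, 32), (34,
   35, 38, 39), (36, 38, 40, 41), (37, 39, 41, 42), (10, 11, 13, 14), (2, 3, 15, 16), (7, 17,
   23, 28), (10, 19, 29, 33), (3, 5, 9, 12), (23, 24, 26, 27), (33, 34, 36, 37)]

/-- Prepend a term unless its coefficient vanishes. -/
noncomputable def consNZ (i : ℕ) (z : ℤ) (t : Row) : Row := iteB (isZ z) t (Row.cons i z t)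

/-- The sparse integer row belonging to a quadruple. -/
noncomputable def mkRow (a b c d : ℤ) (t : ℕ × ℕ × ℕ × ℕ) : Row :=
  consNZ t.1 a (consNZ t.2.1 b (consNZ t.2.2.1 c (consNZ t.2.2.2 d Row.nil)))

/-- The integer rows of the matrix of consequences. -/
noncomputable def rowsZ (a b c d : ℤ) : Sys :=
  List.rec Sys.nil (fun t _ ih => Sys.cons (mkRow a b c d t) ih) quads

theorem dotR_consNZ (x : ℕ → ℚ) (i : ℕ) (z : ℤ) (t : Row) :
    dotR x (consNZ i z t) = z * x i + dotR x t := by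
  unfold consNZ
  cases h : isZ z with
  | true => rw [iteB_true, isZ_true h]; simp
  | false => rw [iteB_false, dotR]

theorem dotR_mkRow (x : ℕ → ℚ) (a b c d : ℤ) (t : ℕ × ℕ × ℕ × ℕ) :
    dotR x (mkRow a b c d t) = a * x t.1 + b * x t.2.1 + c * x t.2.2.1 + d * x t.2.2.2 := by
  unfold mkRow
  simp only [dotR_consNZ, dotR]
  ring

theorem solves_rowsZ (x : ℕ → ℚ) (a b c d : ℤ)
    (h : ∀ t ∈ quads, a * x t.1 + b * x t.2.1 + c * x t.2.2.1 + d * x t.2.2.2 = 0) :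
    solves x (rowsZ a b c d) := by
  unfold rowsZ
  generalize quads = l at h
  induction l with
  | nil => trivial
  | cons t l ih =>
    refine ⟨?_, ih fun t' ht' => h t' (List.mem_cons_of_mem _ ht')⟩
    rw [dotR_mkRow]
    exact h t (List.mem_cons_self ..)

theorem quads_eq : ∀ t ∈ quads, ∃ i : Fin 42, t = (colP i, colQ i, colR i, colS i) := by
  decide +kernel

theorem cols_range : ∀ i : Fin 42, (1 ≤ colP i ∧ colP i ≤ 42) ∧ (1 ≤ colQ i ∧ colQ i ≤ 42) ∧
    (1 ≤ colR i ∧ colR i ≤ 42) ∧ (1 ≤ colS i ∧ colS i ≤ 42) := by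
  decide +kernel

/-- Extension of a vector to a sequence (with indices shifted by one). -/
def extV : (Fin 42 → ℚ) →ₗ[ℚ] (ℕ → ℚ) where
  toFun v i := if hi : i - 1 < 42 then v ⟨i - 1, hi⟩ else 0
  map_add' v w := by ext i; by_cases hi : i - 1 < 42 <;> simp [hi]
  map_smul' t v := by ext i; by_cases hi : i - 1 < 42 <;> simp [hi]

theorem extV_apply (v : Fin 42 → ℚ) (i : ℕ) (h : i - 1 < 42) : extV v i = v ⟨i - 1, h⟩ := by
  simp [extV, h]

theorem sum_ite_col (v : Fin 42 → ℚ) (u : ℚ) (p : ℕ) (hp : 1 ≤ p ∧ p ≤ 42) :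
    ∑ j : Fin 42, (if (j : ℕ) + 1 = p then u else 0) * v j = u * extV v p := by
  have h : p - 1 < 42 := by omega
  rw [extV_apply v p h, Finset.sum_eq_single (⟨p - 1, h⟩ : Fin 42)]
  · rw [if_pos]
    simp only
    omega
  · intro j _ hj
    rw [if_neg, zero_mul]
    intro hcon
    apply hj
    apply Fin.ext
    simp only
    omega
  · simp

theorem mulVec_row (a b c d : ℚ) (v : Fin 42 → ℚ) (i : Fin 42) :
    (consMatrix ℚ a b c d).mulVec v i = a * extV v (colP i) + b * extV v (colQ i) +
      c * extV v (colR i) + d * extV v (colS i) := by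
  obtain ⟨h1, h2, h3, h4⟩ := cols_range i
  simp only [Matrix.mulVec, dotProduct, consMatrix, add_mul, Finset.sum_add_distrib]
  rw [sum_ite_col v a _ h1, sum_ite_col v b _ h2, sum_ite_col v c _ h3, sum_ite_col v d _ h4]

theorem rank_of_solve (a b c d : ℤ) (h : solve 43 42 1 6 (rowsZ a b c d) = true) :
    36 ≤ (consMatrix ℚ a b c d).rank := by
  obtain ⟨F, hF, H⟩ := solve_sound 43 42 1 6 _ h
  set f := (consMatrix ℚ a b c d).mulVecLin with hf
  have hrn := f.finrank_range_add_finrank_ker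
  have hdim : Module.finrank ℚ (Fin 42 → ℚ) = 42 := by simp
  -- restriction of kernel vectors to the free coordinates
  let res : (ℕ → ℚ) →ₗ[ℚ] (F → ℚ) := LinearMap.funLeft ℚ ℚ (fun i : F => (i : ℕ))
  have hinj : Function.Injective ((res.comp extV).comp (LinearMap.ker f).subtype) := by
    rw [← LinearMap.ker_eq_bot, LinearMap.ker_eq_bot']
    rintro ⟨v, hv⟩ hv0
    have hv' : (consMatrix ℚ a b c d).mulVec v = 0 := by simpa [hf] using hv
    have hz := H (extV v) (solves_rowsZ _ a b c d (by
      intro t ht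
      obtain ⟨i, rfl⟩ := quads_eq t ht
      have := congrFun hv' i
      rwa [mulVec_row] at this)) (by
      intro i hi
      exact congrFun hv0 ⟨i, hi⟩)
    apply Subtype.ext
    funext j
    have := hz (j + 1) (by omega) (by omega)
    rw [extV_apply v _ (by omega)] at this
    exact this
  have hle := LinearMap.finrank_le_finrank_of_injective hinj
  rw [Module.finrank_fintype_fun_eq_card, Fintype.card_coe] at hle
  rw [Matrix.rank, ← hf]
  omega

theorem rank_of_solve_neg (a b c d : ℤ) (h : solve 43 42 1 6 (rowsZ (-a) (-b) (-c) (-d)) = true) :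
    36 ≤ (consMatrix ℚ a b c d).rank := by
  have h1 := rank_of_solve _ _ _ _ h
  have h2 : consMatrix ℚ ((-a : ℤ) : ℚ) ((-b : ℤ) : ℚ) ((-c : ℤ) : ℚ) ((-d : ℤ) : ℚ)
      = -consMatrix ℚ a b c d := by
    ext i j
    simp only [consMatrix, Matrix.neg_apply, Int.cast_neg]
    split_ifs <;> ring
  rw [h2] at h1
  refine h1.trans (le_of_eq ?_)
  have h3 : (-consMatrix ℚ (a : ℚ) b c d).mulVecLin = -(consMatrix ℚ (a : ℚ) b c d).mulVecLin := by
    ext v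
    simp
  rw [Matrix.rank, Matrix.rank, h3, LinearMap.range_neg]

/-- Boolean version of the list of exceptional families. -/
noncomputable def famB (a b c d : ℤ) : Bool :=
  bif isZ a then (bif isZ b then true else isZ c || isZ d)
  else (isZ b && isZ c) || (isZ c && isZ d) || (isZ (a + b) && isZ (a + d))

theorem famB_sound (a b c d : ℤ) (h : famB a b c d = true)
    (hne : ((a : ℚ), (b : ℚ), (c : ℚ), (d : ℚ)) ≠ (0, 0, 0, 0)) :
    ∃ lam t : ℚ, lam ≠ 0 ∧
      (((a : ℚ), (b : ℚ), (c : ℚ), (d : ℚ)) = (lam * 1, lam * 0, lam * 0, lam * t) ∨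
       ((a : ℚ), (b : ℚ), (c : ℚ), (d : ℚ)) = (lam * 1, lam * t, lam * 0, lam * 0) ∨
       ((a : ℚ), (b : ℚ), (c : ℚ), (d : ℚ)) = (lam * 1, lam * (-1), lam * t, lam * (-1)) ∨
       ((a : ℚ), (b : ℚ), (c : ℚ), (d : ℚ)) = (lam * 0, lam * 1, lam * 0, lam * t) ∨
       ((a : ℚ), (b : ℚ), (c : ℚ), (d : ℚ)) = (lam * 0, lam * 1, lam * t, lam * 0) ∨
       ((a : ℚ), (b : ℚ), (c : ℚ), (d : ℚ)) = (lam * 0, lam * 0, lam * 1, lam * t) ∨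
       ((a : ℚ), (b : ℚ), (c : ℚ), (d : ℚ)) = (lam * 0, lam * 0, lam * 0, lam * 1)) := by
  have cancel : ∀ u w : ℚ, u ≠ 0 → u * (w / u) = w := fun u w hu => by field_simp
  unfold famB at h
  cases hza : isZ a with
  | true =>
    have ha := isZ_true hza
    subst ha
    cases hzb : isZ b with
    | true =>
      have hb := isZ_true hzb
      subst hb
      by_cases hc : (c : ℚ) = 0
      · have hd : (d : ℚ) ≠ 0 := by
          intro hd; apply hne; simp [hc, hd]
        exact ⟨d, 0, hd, by simp [hc]⟩
      · exact ⟨c, d / c, hc, by simp [cancel _ _ hc]⟩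
    | false =>
      have hb : (b : ℚ) ≠ 0 := by exact_mod_cast isZ_false hzb
      simp only [hza, hzb, cond_true, cond_false, Bool.or_eq_true] at h
      rcases h with h | h
      · have := isZ_true h
        subst this
        exact ⟨b, d / b, hb, by simp [cancel _ _ hb]⟩
      · have := isZ_true h
        subst this
        exact ⟨b, c / b, hb, by simp [cancel _ _ hb]⟩
  | false =>
    have ha : (a : ℚ) ≠ 0 := by exact_mod_cast isZ_false hza
    simp only [hza, cond_false, Bool.or_eq_true, Bool.and_eq_true] at h
    rcases h with (⟨h1, h2⟩ | ⟨h1, h2⟩) | ⟨h1, h2⟩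
    · have h1 := isZ_true h1
      have h2 := isZ_true h2
      subst h1 h2
      exact ⟨a, d / a, ha, by simp [cancel _ _ ha]⟩
    · have h1 := isZ_true h1
      have h2 := isZ_true h2
      subst h1 h2
      exact ⟨a, b / a, ha, by simp [cancel _ _ ha]⟩
    · have h1 : b = -a := by have := isZ_true h1; omega
      have h2 : d = -a := by have := isZ_true h2; omega
      subst h1 h2
      exact ⟨a, c / a, ha, by simp [cancel _ _ ha]⟩

/-- The admissible parameter values. -/
def vals : List ℤ := [0, 1, -1, 2, -2]

/-- The check for one value of `a`. -/
noncomputable def checkA (a : ℤ) : Bool :=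
  vals.all fun b => vals.all fun c => vals.all fun d =>
    famB a b c d || solve 43 42 1 6 (rowsZ a b c d)

theorem checkA_zero : checkA 0 = true := by decide +kernel
theorem checkA_one : checkA 1 = true := by decide +kernel
theorem checkA_two : checkA 2 = true := by decide +kernel

theorem mem_vals {a : ℚ} (ha : a ∈ ({0, 1, -1, 2, -2} : Set ℚ)) :
    ∃ z ∈ vals, (z : ℚ) = a := by
  simp only [Set.mem_insert_iff, Set.mem_singleton_iff] at ha
  rcases ha with rfl | rfl | rfl | rfl | rfl
  · exact ⟨0, by decide, by norm_num⟩
  · exact ⟨1, by decide, by norm_num⟩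
  · exact ⟨-1, by decide, by norm_num⟩
  · exact ⟨2, by decide, by norm_num⟩
  · exact ⟨-2, by decide, by norm_num⟩

theorem neg_mem_vals {a : ℤ} (ha : a ∈ vals) : -a ∈ vals := by
  simp only [vals, List.mem_cons, List.not_mem_nil, or_false] at ha ⊢
  omega

theorem famB_neg (a b c d : ℤ) (h : famB (-a) (-b) (-c) (-d) = true) : famB a b c d = true := by
  have hz : ∀ z : ℤ, isZ (-z) = isZ z := by
    intro z
    rcases z with (_ | n) | n <;> rfl
  have h1 : -a + -b = -(a + b) := by ring
  have h2 : -a + -d = -(a + d) := by ring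
  unfold famB at h ⊢
  rwa [h1, h2, hz, hz, hz, hz, hz, hz] at h

theorem checkA_apply {a b c d : ℤ} (h : checkA a = true) (hb : b ∈ vals) (hc : c ∈ vals)
    (hd : d ∈ vals) : famB a b c d = true ∨ solve 43 42 1 6 (rowsZ a b c d) = true := by
  rw [checkA, List.all_eq_true] at h
  have h := h b hb
  rw [List.all_eq_true] at h
  have h := h c hc
  rw [List.all_eq_true] at h
  have h := h d hd
  rwa [Bool.or_eq_true] at h

theorem check_all {a b c d : ℤ} (ha : a ∈ vals) (hb : b ∈ vals) (hc : c ∈ vals)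
    (hd : d ∈ vals) : famB a b c d = true ∨ 36 ≤ (consMatrix ℚ a b c d).rank := by
  have pos : checkA a = true → famB a b c d = true ∨ 36 ≤ (consMatrix ℚ a b c d).rank :=
    fun h => (checkA_apply h hb hc hd).imp id (rank_of_solve a b c d)
  have neg : checkA (-a) = true → famB a b c d = true ∨ 36 ≤ (consMatrix ℚ a b c d).rank :=
    fun h => (checkA_apply h (neg_mem_vals hb) (neg_mem_vals hc) (neg_mem_vals hd)).imp
      (famB_neg a b c d) (rank_of_solve_neg a b c d)
  simp only [vals, List.mem_cons, List.not_mem_nil, or_false] at ha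
  rcases ha with rfl | rfl | rfl | rfl | rfl
  · exact pos checkA_zero
  · exact pos checkA_one
  · exact neg checkA_one
  · exact pos checkA_two
  · exact neg checkA_two

/-- If `v = (a,b,c,d) ∈ ℚ⁴` is nonzero, has all components in `{0, 1, -1, 2, -2}`,
and the matrix of consequences `M(a,b,c,d)` has rank at most 35 over `ℚ` (submaximal,
the maximum possible rank being 36), then `v` is a nonzero scalar multiple `λ·u` of one
of the seven vectors `u = (1,0,0,t)`, `(1,t,0,0)`, `(1,-1,t,-1)`, `(0,1,0,t)`,
`(0,1,t,0)`, `(0,0,1,t)`, `(0,0,0,1)` for some `t ∈ ℚ`. -/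
theorem stmt_0 (a b c d : ℚ)
    (hne : (a, b, c, d) ≠ (0, 0, 0, 0))
    (ha : a ∈ ({0, 1, -1, 2, -2} : Set ℚ))
    (hb : b ∈ ({0, 1, -1, 2, -2} : Set ℚ))
    (hc : c ∈ ({0, 1, -1, 2, -2} : Set ℚ))
    (hd : d ∈ ({0, 1, -1, 2, -2} : Set ℚ))
    (hrank : (consMatrix ℚ a b c d).rank ≤ 35) :
    ∃ lam t : ℚ, lam ≠ 0 ∧
      ((a, b, c, d) = (lam * 1, lam * 0, lam * 0, lam * t) ∨
       (a, b, c, d) = (lam * 1, lam * t, lam * 0, lam * 0) ∨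
       (a, b, c, d) = (lam * 1, lam * (-1), lam * t, lam * (-1)) ∨
       (a, b, c, d) = (lam * 0, lam * 1, lam * 0, lam * t) ∨
       (a, b, c, d) = (lam * 0, lam * 1, lam * t, lam * 0) ∨
       (a, b, c, d) = (lam * 0, lam * 0, lam * 1, lam * t) ∨
       (a, b, c, d) = (lam * 0, lam * 0, lam * 0, lam * 1)) := by
  obtain ⟨a, ha', rfl⟩ := mem_vals ha
  obtain ⟨b, hb', rfl⟩ := mem_vals hb
  obtain ⟨c, hc', rfl⟩ := mem_vals hc
  obtain ⟨d, hd', rfl⟩ := mem_vals hd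
  rcases check_all ha' hb' hc' hd' with h | h
  · exact famB_sound a b c d h hne
  · omega
end

section
/- Let M(a,b,c,d) be the matrix of consequences described in the context, with entries in ℚ. Let S be the set of nonzero vectors v = (a,b,c,d) ∈ ℤ⁴ whose components lie in {0, 1, −1, 2, −2}, whose first nonzero component is positive, and whose components have greatest common divisor 1. Then for v ∈ S, the rank of M(v) over ℚ is strictly less than 36 if and only if v is one of the following 41 vectors, in which case the rank equals the indicated value: (1,0,0,0)→27, (1,0,0,1)→32, (1,0,0,−1)→27, (1,0,0,2)→32, (1,0,0,−2)→32, (1,1,0,0)→32, (1,−1,0,0)→27, (1,−1,0,−1)→32, (1,−1,1,−1)→27, (1,−1,−1,−1)→27, (1,−1,2,−1)→32, (1,−1,−2,−1)→32, (1,2,0,0)→32, (1,−2,0,0)→32, (2,0,0,1)→32, (2,0,0,−1)→32, (2,1,0,0)→32, (2,−1,0,0)→32, (2,−2,1,−2)→32, (2,−2,−1,−2)→32, (0,1,0,0)→26, (0,1,0,1)→34, (0,1,0,−1)→31, (0,1,0,2)→34, (0,1,0,−2)→34, (0,1,1,0)→31, (0,1,−1,0)→31, (0,1,2,0)→31, (0,1,−2,0)→31,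 (0,2,0,1)→34, (0,2,0,−1)→34, (0,2,1,0)→31, (0,2,−1,0)→31, (0,0,1,0)→26, (0,0,1,1)→31, (0,0,1,−1)→31, (0,0,1,2)→31, (0,0,1,−2)→31, (0,0,2,1)→31, (0,0,2,−1)→31, (0,0,0,1)→26. For all other v ∈ S, the rank of M(v) over ℚ equals 36. -/
/-- The table of the 41 submaximal-rank coefficient vectors of degree 3 and
multiplicity 1, paired with the corresponding rank of the matrix of consequences. -/
def submaxTable : List ((ℤ × ℤ × ℤ × ℤ) × ℕ) :=
  [((1,0,0,0),27), ((1,0,0,1),32), ((1,0,0,-1),27), ((1,0,0,2),32), ((1,0,0,-2),32),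
   ((1,1,0,0),32), ((1,-1,0,0),27), ((1,-1,0,-1),32), ((1,-1,1,-1),27), ((1,-1,-1,-1),27),
   ((1,-1,2,-1),32), ((1,-1,-2,-1),32), ((1,2,0,0),32), ((1,-2,0,0),32), ((2,0,0,1),32),
   ((2,0,0,-1),32), ((2,1,0,0),32), ((2,-1,0,0),32), ((2,-2,1,-2),32), ((2,-2,-1,-2),32),
   ((0,1,0,0),26), ((0,1,0,1),34), ((0,1,0,-1),31), ((0,1,0,2),34), ((0,1,0,-2),34),
   ((0,1,1,0),31), ((0,1,-1,0),31), ((0,1,2,0),31), ((0,1,-2,0),31), ((0,2,0,1),34),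
   ((0,2,0,-1),34), ((0,2,1,0),31), ((0,2,-1,0),31), ((0,0,1,0),26), ((0,0,1,1),31),
   ((0,0,1,-1),31), ((0,0,1,2),31), ((0,0,1,-2),31), ((0,0,2,1),31), ((0,0,2,-1),31),
   ((0,0,0,1),26)]

/-! ### Integer rows as finitely supported rational sequences -/

/-- The rational sequence represented by a list of integers (padded with zeros). -/
def toVec : List ℤ → ℕ → ℚ
  | [], _ => 0
  | x :: _, 0 => (x : ℚ)
  | _ :: l, n + 1 => toVec l n

/-- Sum of two rows of possibly different lengths. -/
def addRow : List ℤ → List ℤ → List ℤ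
  | [], v => v
  | u, [] => u
  | x :: u, y :: v => Int.add x y :: addRow u v

/-- `h * u - g * v` for rows of possibly different lengths. -/
def combRow (h g : ℤ) : List ℤ → List ℤ → List ℤ
  | [], v => v.map fun y => Int.neg (Int.mul g y)
  | u, [] => u.map fun x => Int.mul h x
  | x :: u, y :: v => Int.sub (Int.mul h x) (Int.mul g y) :: combRow h g u v

/-- The row with entry `x` at (0-based) position `n`. -/
def singleRow (x : ℤ) : ℕ → List ℤ
  | 0 => [x]
  | n + 1 => 0 :: singleRow x n

/-- First entry of a row. -/
def hd : List ℤ → ℤ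
  | [] => 0
  | x :: _ => x

/-- Eliminate the first entry of a row by the pivot row `h :: t`, and drop it. -/
def elimRow (h : ℤ) (t : List ℤ) : List ℤ → List ℤ
  | [] => []
  | g :: u => if g = 0 then u else combRow h g u t

/-- Find a row with nonzero first entry: the pivot and the remaining rows. -/
def findPivot : List (List ℤ) → Option (ℤ × List ℤ × List (List ℤ))
  | [] => none
  | r :: L =>
    match r with
    | [] =>
      match findPivot L with
      | none => none
      | some (h, t, L') => some (h, t, [] :: L')
    | x :: u =>
      if x = 0 then
        match findPivot L with
        | none => none
        | some (h, t, L') => some (h, t, (x :: u) :: L')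
      else some (x, u, L)

/-- Fraction-free Gaussian elimination on (at most) `n` columns. -/
def rk : ℕ → List (List ℤ) → Option ℕ
  | 0, L => if L.all List.isEmpty then some 0 else none
  | n + 1, L =>
    match findPivot L with
    | none => rk n (L.map List.tail)
    | some (h, t, L') => (rk n (L'.map (elimRow h t))).map Nat.succ

/-- The row space of a list of rows. -/
def rowSp (L : List (List ℤ)) : Submodule ℚ (ℕ → ℚ) :=
  Submodule.span ℚ (Set.image toVec {r | r ∈ L})

/-- Prepend a zero. -/
def shiftMap : (ℕ → ℚ) →ₗ[ℚ] (ℕ → ℚ) where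
  toFun f n := match n with
    | 0 => 0
    | m + 1 => f m
  map_add' f g := by ext n; cases n <;> simp
  map_smul' c f := by ext n; cases n <;> simp

theorem finrank_map_inj {V W : Type*} [AddCommGroup V] [Module ℚ V] [AddCommGroup W] [Module ℚ W]
    (f : V →ₗ[ℚ] W) (hf : Function.Injective f) (p : Submodule ℚ V) :
    Module.finrank ℚ (p.map f) = Module.finrank ℚ p :=
  (LinearEquiv.finrank_eq (Submodule.equivMapOfInjective f hf p)).symm

theorem shiftMap_inj : Function.Injective shiftMap := by
  intro f g h
  ext n
  exact congrFun h (n + 1)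

theorem toVec_nil : toVec [] = 0 := by ext n; simp [toVec]

theorem toVec_addRow (u v : List ℤ) (n : ℕ) :
    toVec (addRow u v) n = toVec u n + toVec v n := by
  induction u generalizing v n with
  | nil => simp [addRow, toVec]
  | cons x u ih =>
    cases v with
    | nil => simp [addRow, toVec]
    | cons y v =>
      cases n with
      | zero =>
        have : Int.add x y = x + y := rfl
        simp only [addRow, toVec, this, Int.cast_add]
      | succ n => simp [addRow, toVec, ih]

theorem toVec_map_mul (f : ℤ → ℤ) (h : ℤ) (hf : ∀ x, f x = h * x) (u : List ℤ) (n : ℕ) :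
    toVec (u.map f) n = h * toVec u n := by
  induction u generalizing n with
  | nil => simp [toVec]
  | cons x u ih => cases n <;> simp [toVec, ih, hf]

theorem toVec_combRow (h g : ℤ) (u v : List ℤ) (n : ℕ) :
    toVec (combRow h g u v) n = h * toVec u n - g * toVec v n := by
  induction u generalizing v n with
  | nil =>
    rw [combRow, toVec_map_mul _ (-g)]
    · simp [toVec]
    · intro x
      have : Int.neg (Int.mul g x) = -(g * x) := rfl
      rw [this]; ring
  | cons x u ih =>
    cases v with
    | nil =>
      rw [combRow, toVec_map_mul _ h]
      · simp [toVec]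
      · intro x; rfl
      · simp
    | cons y v =>
      cases n with
      | zero =>
        have : Int.sub (Int.mul h x) (Int.mul g y) = h * x - g * y := rfl
        simp only [combRow, toVec, this, Int.cast_sub, Int.cast_mul]
      | succ n => simp [combRow, toVec, ih]

theorem toVec_singleRow (x : ℤ) (m n : ℕ) :
    toVec (singleRow x m) n = if n = m then (x : ℚ) else 0 := by
  induction m generalizing n with
  | zero => cases n <;> simp [singleRow, toVec]
  | succ m ih => cases n <;> simp [singleRow, toVec, ih]

theorem toVec_cons_zero (u : List ℤ) : toVec (0 :: u) = shiftMap (toVec u) := by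
  ext n; cases n <;> simp [toVec, shiftMap]

theorem elimRow_eq (h : ℤ) (t r : List ℤ) : ∃ k g : ℤ, (h ≠ 0 → k ≠ 0) ∧
    (k : ℚ) • toVec r = (g : ℚ) • toVec (h :: t) + shiftMap (toVec (elimRow h t r)) := by
  cases r with
  | nil =>
    refine ⟨1, 0, by simp, ?_⟩
    simp [elimRow, toVec_nil]
  | cons g u =>
    by_cases hg : g = 0
    · subst hg
      refine ⟨1, 0, by simp, ?_⟩
      simp [elimRow, toVec_cons_zero]
    · refine ⟨h, g, id, ?_⟩
      ext n
      cases n with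
      | zero => simp [elimRow, hg, toVec, shiftMap]; ring
      | succ n => simp [elimRow, hg, toVec, shiftMap, toVec_combRow]

theorem findPivot_none (L : List (List ℤ)) (h : findPivot L = none) :
    ∀ r ∈ L, toVec r = shiftMap (toVec r.tail) := by
  induction L with
  | nil => simp
  | cons r L ih =>
    cases r with
    | nil =>
      simp only [findPivot] at h
      split at h
      · rename_i h'
        intro r hr
        rcases List.mem_cons.1 hr with rfl | hr
        · simp [toVec_nil]
        · exact ih h' r hr
      · simp at h
    | cons x u =>
      simp only [findPivot] at h
      split at h
      · rename_i hx
        subst hx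
        split at h
        · rename_i h'
          intro r hr
          rcases List.mem_cons.1 hr with rfl | hr
          · simp [toVec_cons_zero]
          · exact ih h' r hr
        · simp at h
      · simp at h

theorem findPivot_some (L : List (List ℤ)) (h : ℤ) (t : List ℤ) (L' : List (List ℤ))
    (e : findPivot L = some (h, t, L')) :
    h ≠ 0 ∧ ∀ r, r ∈ L ↔ r = h :: t ∨ r ∈ L' := by
  induction L generalizing h t L' with
  | nil => simp [findPivot] at e
  | cons r L ih =>
    cases r with
    | nil =>
      simp only [findPivot] at e
      split at e
      · simp at e
      · rename_i h1 t1 L1 e1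
        obtain ⟨a1, a2⟩ := ih _ _ _ e1
        simp only [Option.some.injEq, Prod.mk.injEq] at e
        obtain ⟨rfl, rfl, rfl⟩ := e
        refine ⟨a1, fun r => ?_⟩
        rw [List.mem_cons, List.mem_cons, a2]
        tauto
    | cons x u =>
      simp only [findPivot] at e
      split at e
      · split at e
        · simp at e
        · rename_i h1 t1 L1 e1
          obtain ⟨a1, a2⟩ := ih _ _ _ e1
          simp only [Option.some.injEq, Prod.mk.injEq] at e
          obtain ⟨rfl, rfl, rfl⟩ := e
          refine ⟨a1, fun r => ?_⟩
          rw [List.mem_cons, List.mem_cons, a2]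
          tauto
      · rename_i hx
        simp only [Option.some.injEq, Prod.mk.injEq] at e
        obtain ⟨rfl, rfl, rfl⟩ := e
        exact ⟨hx, fun r => List.mem_cons⟩

theorem rowSp_finite (L : List (List ℤ)) : FiniteDimensional ℚ (rowSp L) :=
  FiniteDimensional.span_of_finite ℚ ((List.finite_toSet L).image _)

theorem mem_rowSp {L : List (List ℤ)} {r : List ℤ} (h : r ∈ L) : toVec r ∈ rowSp L :=
  Submodule.subset_span ⟨r, h, rfl⟩

theorem rowSp_le {L : List (List ℤ)} {W : Submodule ℚ (ℕ → ℚ)}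
    (h : ∀ r ∈ L, toVec r ∈ W) : rowSp L ≤ W := by
  refine Submodule.span_le.2 ?_
  rintro _ ⟨r, hr, rfl⟩
  exact h r hr

theorem rowSp_none (L : List (List ℤ)) (h : findPivot L = none) :
    rowSp L = (rowSp (L.map List.tail)).map shiftMap := by
  have h1 := findPivot_none L h
  apply le_antisymm
  · refine rowSp_le fun r hr => ?_
    rw [h1 r hr]
    exact Submodule.mem_map_of_mem (mem_rowSp (List.mem_map_of_mem hr))
  · refine Submodule.map_le_iff_le_comap.2 (rowSp_le fun r hr => ?_)
    obtain ⟨s, hs, rfl⟩ := List.mem_map.1 hr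
    rw [Submodule.mem_comap, ← h1 s hs]
    exact mem_rowSp hs

theorem rowSp_some (L : List (List ℤ)) (h : ℤ) (t : List ℤ) (L' : List (List ℤ))
    (e : findPivot L = some (h, t, L')) :
    rowSp L = (ℚ ∙ toVec (h :: t)) ⊔ (rowSp (L'.map (elimRow h t))).map shiftMap := by
  obtain ⟨h0, hL⟩ := findPivot_some L h t L' e
  have hp : toVec (h :: t) ∈ rowSp L := mem_rowSp ((hL _).2 (Or.inl rfl))
  apply le_antisymm
  · refine rowSp_le fun r hr => ?_
    rcases (hL r).1 hr with rfl | hr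
    · exact Submodule.mem_sup_left (Submodule.mem_span_singleton_self _)
    · obtain ⟨k, g, hk, hkg⟩ := elimRow_eq h t r
      have hk' : (k : ℚ) ≠ 0 := by exact_mod_cast hk h0
      rw [← Submodule.smul_mem_iff _ hk', hkg]
      refine Submodule.add_mem_sup
        (Submodule.smul_mem _ _ (Submodule.mem_span_singleton_self _)) ?_
      exact Submodule.mem_map_of_mem (mem_rowSp (List.mem_map_of_mem hr))
  · refine sup_le ((Submodule.span_singleton_le_iff_mem _ _).2 hp) ?_
    refine Submodule.map_le_iff_le_comap.2 (rowSp_le fun r hr => ?_)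
    obtain ⟨s, hs, rfl⟩ := List.mem_map.1 hr
    obtain ⟨k, g, -, hkg⟩ := elimRow_eq h t s
    rw [Submodule.mem_comap, ← sub_eq_iff_eq_add'.2 hkg]
    exact Submodule.sub_mem _ (Submodule.smul_mem _ _ (mem_rowSp ((hL _).2 (Or.inr hs))))
      (Submodule.smul_mem _ _ hp)

/-- Correctness of the elimination. -/
theorem rk_correct (n : ℕ) (L : List (List ℤ)) (k : ℕ) (e : rk n L = some k) :
    Module.finrank ℚ (rowSp L) = k := by
  induction n generalizing L k with
  | zero =>
    simp only [rk] at e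
    split at e
    · rename_i hL
      simp only [Option.some.injEq] at e
      subst e
      have : rowSp L = ⊥ := by
        refine le_bot_iff.1 (rowSp_le fun r hr => ?_)
        have := List.all_eq_true.1 hL r hr
        rw [List.isEmpty_iff.1 this, toVec_nil]
        exact Submodule.zero_mem _
      rw [this, finrank_bot]
    · simp at e
  | succ n ih =>
    simp only [rk] at e
    split at e
    · rename_i hL
      rw [rowSp_none L hL, finrank_map_inj _ shiftMap_inj]
      exact ih _ _ e
    · rename_i h t L' hL
      obtain ⟨m, hm, rfl⟩ := Option.map_eq_some_iff.1 e
      have h0 := (findPivot_some L h t L' hL).1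
      have i1 := rowSp_finite (L'.map (elimRow h t))
      have key := Submodule.finrank_sup_add_finrank_inf_eq (ℚ ∙ toVec (h :: t))
        ((rowSp (L'.map (elimRow h t))).map shiftMap)
      have hdis : (ℚ ∙ toVec (h :: t)) ⊓ (rowSp (L'.map (elimRow h t))).map shiftMap = ⊥ := by
        refine le_bot_iff.1 ?_
        rintro x ⟨hx1, hx2⟩
        obtain ⟨c, rfl⟩ := Submodule.mem_span_singleton.1 hx1
        obtain ⟨w, -, hw⟩ := hx2
        have h2 := congrFun hw 0
        have h3 : (0 : ℚ) = c * h := h2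
        have h4 : c = 0 := by
          rcases mul_eq_zero.1 h3.symm with h5 | h5
          · exact h5
          · exact absurd (by exact_mod_cast h5) h0
        simp [h4]
      have hne : toVec (h :: t) ≠ 0 := by
        intro h1
        have h2 : (h : ℚ) = 0 := congrFun h1 0
        exact h0 (by exact_mod_cast h2)
      rw [hdis, finrank_bot, finrank_span_singleton hne,
        finrank_map_inj _ shiftMap_inj, ih _ _ hm] at key
      rw [rowSp_some L h t L' hL]
      omega

/-! ### The matrix of consequences -/

/-- Row `i` of the matrix as a list of integers. -/
def consRow (a b c d : ℤ) (i : Fin 42) : List ℤ :=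
  addRow (addRow (addRow (singleRow a (colP i - 1)) (singleRow b (colQ i - 1)))
    (singleRow c (colR i - 1))) (singleRow d (colS i - 1))

/-- All rows. -/
def consRows (a b c d : ℤ) : List (List ℤ) := (List.finRange 42).map (consRow a b c d)

theorem cols_pos : ∀ i, (1 ≤ colP i ∧ colP i ≤ 42) ∧ (1 ≤ colQ i ∧ colQ i ≤ 42) ∧
    (1 ≤ colR i ∧ colR i ≤ 42) ∧ (1 ≤ colS i ∧ colS i ≤ 42) := by
  decide +kernel

/-- Extension of a vector by zeros. -/
def extMap : (Fin 42 → ℚ) →ₗ[ℚ] (ℕ → ℚ) where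
  toFun f n := if h : n < 42 then f ⟨n, h⟩ else 0
  map_add' f g := by ext n; by_cases h : n < 42 <;> simp [h]
  map_smul' c f := by ext n; by_cases h : n < 42 <;> simp [h]

theorem extMap_inj : Function.Injective extMap := by
  intro f g h
  ext n
  have := congrFun h n
  simpa [extMap] using this

theorem extMap_row (a b c d : ℤ) (i : Fin 42) :
    extMap (consMatrix ℚ (a : ℚ) b c d i) = toVec (consRow a b c d i) := by
  obtain ⟨hp, hq, hr, hs⟩ := cols_pos i
  have key : ∀ n m : ℕ, 1 ≤ m → ((n = m - 1) ↔ (n + 1 = m)) := by intro n m h; omega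
  ext n
  rw [consRow, toVec_addRow, toVec_addRow, toVec_addRow, toVec_singleRow, toVec_singleRow,
    toVec_singleRow, toVec_singleRow]
  simp only [key n _ hp.1, key n _ hq.1, key n _ hr.1, key n _ hs.1]
  by_cases h : n < 42
  · simp [extMap, h, consMatrix]
  · have h1 : n + 1 ≠ colP i := by omega
    have h2 : n + 1 ≠ colQ i := by omega
    have h3 : n + 1 ≠ colR i := by omega
    have h4 : n + 1 ≠ colS i := by omega
    simp [extMap, h, h1, h2, h3, h4]

theorem rank_eq (a b c d : ℤ) :
    (consMatrix ℚ (a : ℚ) b c d).rank = Module.finrank ℚ (rowSp (consRows a b c d)) := by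
  rw [Matrix.rank_eq_finrank_span_row, ← finrank_map_inj _ extMap_inj,
    Submodule.map_span]
  have : Set.image extMap (Set.range (consMatrix ℚ (a : ℚ) b c d).row)
      = Set.image toVec {r | r ∈ consRows a b c d} := by
    ext x
    constructor
    · rintro ⟨_, ⟨i, rfl⟩, rfl⟩
      exact ⟨consRow a b c d i, List.mem_map_of_mem (List.mem_finRange i),
        (extMap_row a b c d i).symm⟩
    · rintro ⟨r, hr, rfl⟩
      obtain ⟨i, -, rfl⟩ := List.mem_map.1 hr
      exact ⟨_, ⟨i, rfl⟩, extMap_row a b c d i⟩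
  rw [this, rowSp]

/-- The claim of the theorem about a candidate value `k` of the rank. -/
abbrev Good (a b c d : ℤ) (k : ℕ) : Prop :=
  (k < 36 ↔ ∃ pr ∈ submaxTable, (a, b, c, d) = pr.1) ∧
  (∀ pr ∈ submaxTable, (a, b, c, d) = pr.1 → k = pr.2) ∧
  ((∀ pr ∈ submaxTable, (a, b, c, d) ≠ pr.1) → k = 36)

/-- Compute the rank and test the claim. -/
def check (a b c d : ℤ) : Bool :=
  match rk 42 (consRows a b c d) with
  | none => false
  | some k => decide (Good a b c d k)

/-- The test succeeds for all admissible vectors that start with `a, b`. -/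
abbrev CheckPair (a b : ℤ) : Prop :=
  ∀ c ∈ ([0, 1, -1, 2, -2] : List ℤ), ∀ d ∈ ([0, 1, -1, 2, -2] : List ℤ),
    (0 < a ∨ (a = 0 ∧ 0 < b) ∨ (a = 0 ∧ b = 0 ∧ 0 < c) ∨
      (a = 0 ∧ b = 0 ∧ c = 0 ∧ 0 < d)) →
    Int.gcd a (Int.gcd b (Int.gcd c d)) = 1 → check a b c d = true

theorem check_z_z : CheckPair 0 (0) := by decide +kernel
theorem check_z_p : CheckPair 0 (1) := by decide +kernel
theorem check_z_pp : CheckPair 0 (2) := by decide +kernel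
theorem check_p_z : CheckPair 1 (0) := by decide +kernel
theorem check_p_p : CheckPair 1 (1) := by decide +kernel
theorem check_p_n : CheckPair 1 (-1) := by decide +kernel
theorem check_p_pp : CheckPair 1 (2) := by decide +kernel
theorem check_p_nn : CheckPair 1 (-2) := by decide +kernel
theorem check_pp_z : CheckPair 2 (0) := by decide +kernel
theorem check_pp_p : CheckPair 2 (1) := by decide +kernel
theorem check_pp_n : CheckPair 2 (-1) := by decide +kernel
theorem check_pp_pp : CheckPair 2 (2) := by decide +kernel
theorem check_pp_nn : CheckPair 2 (-2) := by decide +kernel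

theorem check_neg_left : ∀ a ∈ ([-1, -2] : List ℤ), ∀ b ∈ ([0, 1, -1, 2, -2] : List ℤ),
    CheckPair a b := by decide +kernel

theorem check_neg_right : ∀ b ∈ ([-1, -2] : List ℤ), CheckPair 0 b := by decide +kernel

theorem check_all_s1 : ∀ a ∈ ([0, 1, -1, 2, -2] : List ℤ), ∀ b ∈ ([0, 1, -1, 2, -2] : List ℤ),
    CheckPair a b := by
  intro a ha b hb
  have hb2 := hb
  simp only [List.mem_cons, List.not_mem_nil, or_false] at ha hb2
  rcases ha with rfl | rfl | rfl | rfl | rfl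
  · rcases hb2 with rfl | rfl | rfl | rfl | rfl
    · exact check_z_z
    · exact check_z_p
    · exact check_neg_right _ (by simp)
    · exact check_z_pp
    · exact check_neg_right _ (by simp)
  · rcases hb2 with rfl | rfl | rfl | rfl | rfl
    · exact check_p_z
    · exact check_p_p
    · exact check_p_n
    · exact check_p_pp
    · exact check_p_nn
  · exact check_neg_left _ (by simp) b hb
  · rcases hb2 with rfl | rfl | rfl | rfl | rfl
    · exact check_pp_z
    · exact check_pp_p
    · exact check_pp_n
    · exact check_pp_pp
    · exact check_pp_nn
  · exact check_neg_left _ (by simp) b hb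

/-- For a nonzero integer vector `v = (a,b,c,d)` with components in `{0, 1, -1, 2, -2}`,
first nonzero component positive and with gcd of the components equal to 1:
the rank of `M(v)` over `ℚ` is `< 36` iff `v` occurs in the table of 41 vectors, in which
case the rank is the tabulated value; for all other such `v` the rank equals 36. -/
theorem stmt_1 (a b c d : ℤ)
    (hne : (a, b, c, d) ≠ (0, 0, 0, 0))
    (ha : a ∈ ({0, 1, -1, 2, -2} : Set ℤ))
    (hb : b ∈ ({0, 1, -1, 2, -2} : Set ℤ))
    (hc : c ∈ ({0, 1, -1, 2, -2} : Set ℤ))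
    (hd : d ∈ ({0, 1, -1, 2, -2} : Set ℤ))
    (hpos : 0 < a ∨ (a = 0 ∧ 0 < b) ∨ (a = 0 ∧ b = 0 ∧ 0 < c) ∨
      (a = 0 ∧ b = 0 ∧ c = 0 ∧ 0 < d))
    (hgcd : Int.gcd a (Int.gcd b (Int.gcd c d)) = 1) :
    ((consMatrix ℚ (a : ℚ) (b : ℚ) (c : ℚ) (d : ℚ)).rank < 36 ↔
      ∃ pr ∈ submaxTable, (a, b, c, d) = pr.1) ∧
    (∀ pr ∈ submaxTable, (a, b, c, d) = pr.1 →
      (consMatrix ℚ (a : ℚ) (b : ℚ) (c : ℚ) (d : ℚ)).rank = pr.2) ∧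
    ((∀ pr ∈ submaxTable, (a, b, c, d) ≠ pr.1) →
      (consMatrix ℚ (a : ℚ) (b : ℚ) (c : ℚ) (d : ℚ)).rank = 36) := by
  have h := check_all_s1 a (by simpa using ha) b (by simpa using hb) c (by simpa using hc)
    d (by simpa using hd) hpos hgcd
  unfold check at h
  split at h
  · simp at h
  · rename_i k hk
    have hr := rk_correct _ _ _ hk
    rw [← rank_eq] at hr
    have hg : Good a b c d k := of_decide_eq_true h
    rw [← hr] at hg
    exact hg
end

section
/- Let K be the field of fractions of the polynomial ring ℚ[a,b,c,d] in four indeterminates a, b, c, d. Then the matrix of consequences M(a,b,c,d), viewed as a matrix over K with the four indeterminates as parameters, has rank exactly 36. -/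
/-- Six left null vectors of the matrix of consequences. -/
def nullMat (K : Type*) [Field K] (a b c d : K) : Matrix (Fin 6) (Fin 42) K :=
  ![
    ![-b, -c, -d, 0, 0, 0, 0, 0, 0, 0, 0, 0, 0, 0, 0, 0, 0, 0, 0, 0, 0, c, d, a, 0, 0, 0, 0, 0, 0, 0, 0, 0, 0, 0, 0, -a, 0, 0, b, 0, 0],
    ![0, 0, 0, 0, 0, 0, 0, -b, -c, -d, 0, 0, 0, 0, 0, 0, 0, 0, 0, 0, 0, 0, 0, 0, b, 0, 0, 0, d, a, 0, 0, 0, 0, 0, 0, 0, -a, 0, 0, c, 0],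
    ![0, 0, 0, 0, 0, 0, 0, 0, 0, 0, 0, 0, 0, 0, -b, -c, -d, 0, 0, 0, 0, 0, 0, 0, 0, 0, 0, 0, 0, 0, b, c, 0, 0, 0, a, 0, 0, -a, 0, 0, d],
    ![a ^ 2 * b, -a * b * c, -a * c ^ 2, -a * c * d, a ^ 2 * d, a ^ 3, a * b ^ 2, a * b * c, a * b * d, -a ^ 2 * c, -a ^ 2 * d, -a ^ 3, 0, 0, 0, 0, 0, 0, -a * b ^ 2, b ^ 2 * c, b * c ^ 2, b * c * d, -a * b * d, -a ^ 2 * b, -b ^ 2 * c, -b * c ^ 2, -b * c * d, a * c ^ 2, a * c * d, a ^ 2 * c, 0, 0, 0, 0, 0, 0, 0, 0, 0, 0, 0, 0],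
    ![a ^ 2 * b, -a * b * c, -a * c ^ 2, -a * c * d, a ^ 2 * d, a ^ 3, a ^ 2 * b + a * b ^ 2, a ^ 2 * c + a * b * c, 0, -a ^ 2 * c - a * c * d, -a ^ 2 * d - a * d ^ 2, 0, -a ^ 2 * b, a * b * c, a * c ^ 2, a * c * d, -a ^ 2 * d, -a ^ 3, -a * b ^ 2, b ^ 2 * c, b * c ^ 2, b * c * d, -a * b * d, -a ^ 2 * b, -a * b * c - b ^ 2 * c, -a * c ^ 2 - b * c ^ 2, 0, a * c ^ 2 + c ^ 2 * d, a * c * d + c * d ^ 2, 0, a * b * d, -b * c * d, -c ^ 2 * d, -c * d ^ 2, a * d ^ 2, a ^ 2 * d, 0, 0, 0, 0, 0, 0],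
    ![0, a ^ 2 * c + a * b * c, -a * b * d + a * c ^ 2, 0, -a ^ 2 * d - a * d ^ 2, 0, -a ^ 2 * b - a * b ^ 2, -a ^ 2 * c - a * b * c, 0, a ^ 2 * c + a * c * d, a ^ 2 * d + a * d ^ 2, 0, a ^ 2 * b + a * b ^ 2, 0, a * b * d - a * c ^ 2, -a ^ 2 * c - a * c * d, 0, 0, 0, -a * b * c - b ^ 2 * c, b ^ 2 * d - b * c ^ 2, 0, a * b * d + b * d ^ 2, 0, a * b * c + b ^ 2 * c, a * c ^ 2 + b * c ^ 2, 0, -a * c ^ 2 - c ^ 2 * d, -a * c * d - c * d ^ 2, 0, -a * b * d - b ^ 2 * d, 0, -b * d ^ 2 + c ^ 2 * d, a * c * d + c * d ^ 2, 0, 0, 0, 0, 0, 0, 0, 0]]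

/-- Rows of the chosen nonsingular minor. -/
def minorRow : Fin 36 → Fin 42 := ![5, 11, 3, 9, 15, 35, 37, 33, 1, 21, 31, 41, 7, 13, 23, 25, 19, 14, 20, 39, 2, 8, 32, 26, 0, 6, 12, 30, 24, 18, 4, 10, 16, 34, 28, 22]

/-- Columns of the chosen nonsingular minor. -/
def minorCol : Fin 36 → Fin 42 := ![12, 6, 39, 26, 30, 9, 22, 35, 7, 14, 28, 32, 23, 24, 1, 29, 8, 10, 11, 2, 37, 25, 33, 34, 20, 16, 17, 18, 19, 4, 40, 27, 31, 36, 38, 15]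

/-- Columns of the nonsingular minor of `nullMat`. -/
def nullCol : Fin 6 → Fin 42 := ![36, 37, 38, 11, 17, 12]

set_option maxHeartbeats 4000000 in
theorem null_aux {K : Type*} [Field K] (a b c d : K) (e : ℕ → K) (k : Fin 6) :
    ∑ i, nullMat K a b c d k i *
      (a * e (colP i) + b * e (colQ i) + c * e (colR i) + d * e (colS i)) = 0 := by
  fin_cases k <;>
  · simp [Fin.sum_univ_succ, nullMat, colP, colQ, colR, colS]
    ring

theorem null_mul {K : Type*} [Field K] (a b c d : K) :
    nullMat K a b c d * consMatrix K a b c d = 0 := by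
  ext k j
  rw [Matrix.mul_apply, Matrix.zero_apply,
    ← null_aux a b c d (fun n => if (j : ℕ) + 1 = n then 1 else 0) k]
  simp only [consMatrix, mul_ite, mul_one, mul_zero]

theorem null_rank {K : Type*} [Field K] (a b c d : K) (ha : a ≠ 0) (hb : b ≠ 0)
    (hab : a + b ≠ 0) : 6 ≤ (nullMat K a b c d).rank := by
  have hdet : ((nullMat K a b c d).submatrix id nullCol).det = -a ^ 3 * a ^ 3 * a ^ 3 * (a * b * (a + b)) := by
    rw [Matrix.det_of_isUpperTriangular]
    · simp only [Matrix.submatrix_apply]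
      simp [Fin.prod_univ_succ, nullMat, nullCol]
      ring
    · intro i j hij
      fin_cases i <;> fin_cases j <;> first | (exfalso; revert hij; decide) | (rw [Matrix.submatrix_apply]; simp [nullMat, nullCol])
  have hu : IsUnit ((nullMat K a b c d).submatrix id nullCol) := by
    rw [Matrix.isUnit_iff_isUnit_det, hdet, isUnit_iff_ne_zero]
    simp [ha, hb, hab]
  have h1 := Matrix.rank_of_isUnit _ hu
  have h2 := Matrix.rank_submatrix_le (nullMat K a b c d) id nullCol
  rw [h1] at h2
  simpa using h2

theorem minor_lower : ∀ i j : Fin 36, i < j →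
    ((minorCol j : ℕ) + 1 ≠ colP (minorRow i) ∧ (minorCol j : ℕ) + 1 ≠ colR (minorRow i)) := by
  decide +kernel

theorem minor_diag : ∀ i : Fin 36,
    ((minorCol i : ℕ) + 1 = colP (minorRow i) ∧ (minorCol i : ℕ) + 1 ≠ colR (minorRow i)) ∨
    ((minorCol i : ℕ) + 1 ≠ colP (minorRow i) ∧ (minorCol i : ℕ) + 1 = colR (minorRow i)) := by
  decide +kernel

/-- At `(a,b,c,d) = (1,0,1,0)` the minor is unitriangular (a spanning forest). -/
theorem minor_det : ((consMatrix ℚ 1 0 1 0).submatrix minorRow minorCol).det = 1 := by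
  rw [Matrix.det_of_isLowerTriangular]
  · apply Finset.prod_eq_one
    intro i _
    rcases minor_diag i with h | h
    · simp only [consMatrix, Matrix.submatrix_apply, if_pos h.1, if_neg h.2]
      simp
    · simp only [consMatrix, Matrix.submatrix_apply, if_neg h.1, if_pos h.2]
      simp
  · intro i j hij
    have h := minor_lower i j hij
    simp [consMatrix, h.1, h.2]

/-- The minor over the polynomial ring. -/
noncomputable def polyMinor : Matrix (Fin 36) (Fin 36) (MvPolynomial (Fin 4) ℚ) :=
  fun i j =>
    (if (minorCol j : ℕ) + 1 = colP (minorRow i) then MvPolynomial.X 0 else 0) +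
    (if (minorCol j : ℕ) + 1 = colQ (minorRow i) then MvPolynomial.X 1 else 0) +
    (if (minorCol j : ℕ) + 1 = colR (minorRow i) then MvPolynomial.X 2 else 0) +
    (if (minorCol j : ℕ) + 1 = colS (minorRow i) then MvPolynomial.X 3 else 0)

theorem polyMinor_det : polyMinor.det ≠ 0 := by
  intro h
  have h1 := congrArg (MvPolynomial.eval (![1, 0, 1, 0] : Fin 4 → ℚ)) h
  rw [RingHom.map_det, map_zero] at h1
  have h2 : (MvPolynomial.eval (![1, 0, 1, 0] : Fin 4 → ℚ)).mapMatrix polyMinor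
      = (consMatrix ℚ 1 0 1 0).submatrix minorRow minorCol := by
    ext i j
    simp [polyMinor, consMatrix, apply_ite (MvPolynomial.eval (![1, 0, 1, 0] : Fin 4 → ℚ))]
  rw [h2, minor_det] at h1
  exact one_ne_zero h1

/-- Over the field of fractions `K = Frac(ℚ[a,b,c,d])` of the polynomial ring in four
indeterminates, the matrix of consequences `M(a,b,c,d)`, with the four indeterminates
as parameters, has rank exactly 36. -/
theorem stmt_2 :
    (consMatrix (FractionRing (MvPolynomial (Fin 4) ℚ))
      (algebraMap (MvPolynomial (Fin 4) ℚ) _ (MvPolynomial.X 0))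
      (algebraMap (MvPolynomial (Fin 4) ℚ) _ (MvPolynomial.X 1))
      (algebraMap (MvPolynomial (Fin 4) ℚ) _ (MvPolynomial.X 2))
      (algebraMap (MvPolynomial (Fin 4) ℚ) _ (MvPolynomial.X 3))).rank = 36 := by
  have hinj := IsFractionRing.injective (MvPolynomial (Fin 4) ℚ)
    (FractionRing (MvPolynomial (Fin 4) ℚ))
  set φ := algebraMap (MvPolynomial (Fin 4) ℚ) (FractionRing (MvPolynomial (Fin 4) ℚ)) with hφ
  have hne : ∀ p : MvPolynomial (Fin 4) ℚ, p ≠ 0 → φ p ≠ 0 := fun p hp h =>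
    hp (hinj (h.trans (map_zero φ).symm))
  set M := consMatrix (FractionRing (MvPolynomial (Fin 4) ℚ)) (φ (MvPolynomial.X 0))
    (φ (MvPolynomial.X 1)) (φ (MvPolynomial.X 2)) (φ (MvPolynomial.X 3)) with hM
  apply le_antisymm
  · have h1 := Matrix.rank_add_rank_le_card_of_mul_eq_zero (null_mul (φ (MvPolynomial.X 0))
      (φ (MvPolynomial.X 1)) (φ (MvPolynomial.X 2)) (φ (MvPolynomial.X 3)))
    have h2 := null_rank (φ (MvPolynomial.X 0))
      (φ (MvPolynomial.X 1)) (φ (MvPolynomial.X 2)) (φ (MvPolynomial.X 3))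
      (hne _ (MvPolynomial.X_ne_zero 0)) (hne _ (MvPolynomial.X_ne_zero 1)) (by
        rw [← map_add]
        apply hne
        intro h
        have h3 := congrArg (MvPolynomial.eval (fun _ => (1 : ℚ))) h
        norm_num at h3)
    rw [Fintype.card_fin, ← hM] at h1
    omega
  · have hmap : M.submatrix minorRow minorCol = φ.mapMatrix polyMinor := by
      ext i j
      simp [polyMinor, hM, consMatrix, apply_ite φ]
    have hu : IsUnit (M.submatrix minorRow minorCol) := by
      rw [Matrix.isUnit_iff_isUnit_det, isUnit_iff_ne_zero, hmap, ← RingHom.map_det]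
      exact hne _ polyMinor_det
    have h1 := Matrix.rank_of_isUnit _ hu
    have h2 := Matrix.rank_submatrix_le M minorRow minorCol
    rw [h1] at h2
    simpa using h2
end

section
/- Consider the one-parameter family of coefficient vectors (1,0,0,d). Over the field ℚ(t) of rational functions in one variable t, the matrix of consequences M(1,0,0,t) has rank exactly 32; moreover, over ℚ, the matrices M(1,0,0,0) and M(1,0,0,−1) each have rank exactly 27. -/
/-- The column `p_i`, counted from zero. -/
def pIdx : Fin 42 → Fin 42 := ![3, 7, 10, 12, 13, 0, 3, 7, 10, 12, 13, 0, 3, 7, 10, 12, 13, 0, 4, 8, 11, 14, 15, 1, 16, 23, 25, 26, 27, 6, 18, 28, 33, 35, 36, 9, 1, 6, 9, 2, 22, 32]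

/-- The column `s_i`, counted from zero. -/
def sIdx : Fin 42 → Fin 42 := ![21, 31, 38, 40, 41, 13, 21, 31, 38, 40, 41, 13, 18, 28, 33, 35, 36, 9, 19, 29, 34, 37, 38, 10, 20, 30, 37, 39, 40, 12, 21, 31, 38, 40, 41, 13, 15, 27, 32, 11, 26, 36]

theorem pIdx_spec : ∀ i, colP i = (pIdx i : ℕ) + 1 := by decide

theorem sIdx_spec : ∀ i, colS i = (sIdx i : ℕ) + 1 := by decide

theorem consMatrix_mulVec {K : Type*} [Field K] (d : K) (x : Fin 42 → K) (i : Fin 42) :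
    (consMatrix K 1 0 0 d).mulVec x i = x (pIdx i) + d * x (sIdx i) := by
  have h : ∀ j, consMatrix K 1 0 0 d i j * x j =
      (if j = pIdx i then x j else 0) + (if j = sIdx i then d * x j else 0) := by
    intro j
    simp only [consMatrix, pIdx_spec, sIdx_spec, Nat.add_right_cancel_iff, ← Fin.ext_iff]
    split_ifs <;> ring
  simp only [Matrix.mulVec, dotProduct, h, Finset.sum_add_distrib, Finset.sum_ite_eq',
    Finset.sum_ite_eq, Finset.mem_univ, if_true]

/-- If the kernel of the matrix is parametrised by the `r` coordinates `sec`, then the rank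
is `42 - r`. -/
theorem rank_add {K : Type*} [Field K] (d : K) (r : ℕ) (sec : Fin r → Fin 42)
    (rt : Fin 42 → Fin r) (w : Fin 42 → K)
    (hrt : ∀ k, rt (sec k) = k) (hw : ∀ k, w (sec k) = 1)
    (hmem : ∀ (c : Fin r → K) i, w (pIdx i) * c (rt (pIdx i)) +
      d * (w (sIdx i) * c (rt (sIdx i))) = 0)
    (huniq : ∀ x : Fin 42 → K, (∀ i, x (pIdx i) + d * x (sIdx i) = 0) →
      ∀ j, x j = w j * x (sec (rt j))) :
    (consMatrix K 1 0 0 d).rank + r = 42 := by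
  have hker : ∀ x : Fin 42 → K, x ∈ LinearMap.ker (consMatrix K 1 0 0 d).mulVecLin ↔
      ∀ i, x (pIdx i) + d * x (sIdx i) = 0 := by
    intro x
    rw [LinearMap.mem_ker, Matrix.mulVecLin_apply, funext_iff]
    simp only [consMatrix_mulVec, Pi.zero_apply]
  have e : LinearMap.ker (consMatrix K 1 0 0 d).mulVecLin ≃ₗ[K] (Fin r → K) :=
    { toFun := fun x k => x.1 (sec k)
      map_add' := fun _ _ => rfl
      map_smul' := fun _ _ => rfl
      invFun := fun c => ⟨fun j => w j * c (rt j), (hker _).2 (hmem c)⟩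
      left_inv := fun x => Subtype.ext (funext fun j => (huniq x.1 ((hker _).1 x.2) j).symm)
      right_inv := fun c => funext fun k => by simp [hrt, hw] }
  have h1 := LinearMap.finrank_range_add_finrank_ker (consMatrix K 1 0 0 d).mulVecLin
  rw [e.finrank_eq] at h1
  simpa [Matrix.rank] using h1

/-- The kernel equations, with the repeated ones left out. -/
theorem kernel_eqs {K : Type*} [Field K] (d : K) (x : Fin 42 → K)
    (h : ∀ i, x (pIdx i) + d * x (sIdx i) = 0) :
    x 3 = - d * x 21 ∧
    x 7 = - d * x 31 ∧
    x 10 = - d * x 38 ∧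
    x 12 = - d * x 40 ∧
    x 13 = - d * x 41 ∧
    x 0 = - d * x 13 ∧
    x 3 = - d * x 18 ∧
    x 7 = - d * x 28 ∧
    x 10 = - d * x 33 ∧
    x 12 = - d * x 35 ∧
    x 13 = - d * x 36 ∧
    x 0 = - d * x 9 ∧
    x 4 = - d * x 19 ∧
    x 8 = - d * x 29 ∧
    x 11 = - d * x 34 ∧
    x 14 = - d * x 37 ∧
    x 15 = - d * x 38 ∧
    x 1 = - d * x 10 ∧
    x 16 = - d * x 20 ∧
    x 23 = - d * x 30 ∧
    x 25 = - d * x 37 ∧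
    x 26 = - d * x 39 ∧
    x 27 = - d * x 40 ∧
    x 6 = - d * x 12 ∧
    x 18 = - d * x 21 ∧
    x 28 = - d * x 31 ∧
    x 33 = - d * x 38 ∧
    x 35 = - d * x 40 ∧
    x 36 = - d * x 41 ∧
    x 9 = - d * x 13 ∧
    x 1 = - d * x 15 ∧
    x 6 = - d * x 27 ∧
    x 9 = - d * x 32 ∧
    x 2 = - d * x 11 ∧
    x 22 = - d * x 26 ∧
    x 32 = - d * x 36 := by
  have g : ∀ i, x (pIdx i) = - d * x (sIdx i) := fun i => by linear_combination h i
  exact ⟨g 0, g 1, g 2, g 3, g 4, g 5, g 12, g 13, g 14, g 15, g 16, g 17, g 18, g 19, g 20, g 21, g 22, g 23, g 24, g 25, g 26, g 27, g 28, g 29, g 30, g 31, g 32, g 33, g 34, g 35, g 36, g 37, g 38, g 39, g 40, g 41⟩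

theorem rank_generic {K : Type*} [Field K] (d : K) (hd : d ≠ 0) (hd1 : d + 1 ≠ 0) :
    (consMatrix K 1 0 0 d).rank + 10 = 42 := by
  refine rank_add d 10
    ![34, 19, 5, 29, 37, 20, 17, 39, 30, 24]
    ![0, 0, 0, 0, 1, 2, 0, 0, 3, 0, 0, 0, 0, 0, 4, 0, 5, 6, 0, 1, 5, 0, 7, 8, 9, 4, 7, 0, 0, 3, 8, 0, 0, 0, 0, 0, 0, 4, 0, 7, 0, 0]
    ![0, 0, d ^ 2, 0, -d, 1, 0, 0, -d, 0, 0, -d, 0, 0, -d, 0, -d, 1, 0, 1, 1, 0, d ^ 2, -d, 1, -d, -d, 0, 0, 1, 1, 0, 0, 0, 1, 0, 0, 1, 0, 1, 0, 0]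
    (by decide) ?_ ?_ ?_
  · intro k
    fin_cases k <;> rfl
  · intro c i
    fin_cases i <;> simp [pIdx, sIdx] <;> ring
  · intro x h
    obtain ⟨h0, h1, h2, h3, h4, h5, h12, h13, h14, h15, h16, h17, h18, h19, h20, h21, h22, h23, h24, h25, h26, h27, h28, h29, h30, h31, h32, h33, h34, h35, h36, h37, h38, h39, h40, h41⟩ := kernel_eqs _ x h
    clear h
    have z42 : x 41 = 0 := by
      have q : d * (d + 1) * x 41 = 0 := by grind
      simpa [hd, hd1] using q
    have z39 : x 38 = 0 := by
      have q : d * (d + 1) * x 38 = 0 := by grind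
      simpa [hd, hd1] using q
    have z22 : x 21 = 0 := by
      have q : d * (d + 1) * x 21 = 0 := by grind
      simpa [hd, hd1] using q
    have z41 : x 40 = 0 := by
      have q : d * (d + 1) * x 40 = 0 := by grind
      simpa [hd, hd1] using q
    have z32 : x 31 = 0 := by
      have q : d * (d + 1) * x 31 = 0 := by grind
      simpa [hd, hd1] using q
    intro j
    fin_cases j <;> simp <;> grind

theorem rank_zero :
    (consMatrix ℚ 1 0 0 0).rank + 15 = 42 := by
  refine rank_add 0 15
    ![34, 19, 5, 29, 37, 20, 17, 39, 30, 24, 41, 38, 21, 40, 31]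
    ![10, 11, 0, 12, 1, 2, 13, 14, 3, 10, 11, 0, 13, 10, 4, 11, 5, 6, 12, 1, 5, 12, 7, 8, 9, 4, 7, 13, 14, 3, 8, 14, 10, 11, 0, 13, 10, 4, 11, 7, 13, 10]
    ![0, 0, 0, 0, 0, 1, 0, 0, 0, 0, 0, 0, 0, 0, 0, 0, 0, 1, 0, 1, 1, 1, 0, 0, 1, 0, 0, 0, 0, 1, 1, 1, 0, 0, 1, 0, 0, 1, 1, 1, 1, 1]
    (by decide) ?_ ?_ ?_
  · intro k
    fin_cases k <;> rfl
  · intro c i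
    fin_cases i <;> simp [pIdx, sIdx] <;> ring
  · intro x h
    obtain ⟨h0, h1, h2, h3, h4, h5, h12, h13, h14, h15, h16, h17, h18, h19, h20, h21, h22, h23, h24, h25, h26, h27, h28, h29, h30, h31, h32, h33, h34, h35, h36, h37, h38, h39, h40, h41⟩ := kernel_eqs _ x h
    clear h
    intro j
    fin_cases j <;> simp <;> grind

theorem rank_neg_one :
    (consMatrix ℚ 1 0 0 (-1)).rank + 15 = 42 := by
  refine rank_add (-1) 15
    ![34, 19, 5, 29, 37, 20, 17, 39, 30, 24, 41, 38, 21, 40, 31]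
    ![10, 11, 0, 12, 1, 2, 13, 14, 3, 10, 11, 0, 13, 10, 4, 11, 5, 6, 12, 1, 5, 12, 7, 8, 9, 4, 7, 13, 14, 3, 8, 14, 10, 11, 0, 13, 10, 4, 11, 7, 13, 10]
    ![1, 1, 1, 1, 1, 1, 1, 1, 1, 1, 1, 1, 1, 1, 1, 1, 1, 1, 1, 1, 1, 1, 1, 1, 1, 1, 1, 1, 1, 1, 1, 1, 1, 1, 1, 1, 1, 1, 1, 1, 1, 1]
    (by decide) ?_ ?_ ?_
  · intro k
    fin_cases k <;> rfl
  · intro c i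
    fin_cases i <;> simp [pIdx, sIdx] <;> ring
  · intro x h
    obtain ⟨h0, h1, h2, h3, h4, h5, h12, h13, h14, h15, h16, h17, h18, h19, h20, h21, h22, h23, h24, h25, h26, h27, h28, h29, h30, h31, h32, h33, h34, h35, h36, h37, h38, h39, h40, h41⟩ := kernel_eqs _ x h
    clear h
    intro j
    fin_cases j <;> simp <;> grind

/-- For the one-parameter family `(1,0,0,d)`: over the rational function field `ℚ(t)`
the matrix of consequences `M(1,0,0,t)` has rank exactly 32, and over `ℚ` the matrices
`M(1,0,0,0)` and `M(1,0,0,-1)` each have rank exactly 27. -/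
theorem stmt_3 :
    (consMatrix (RatFunc ℚ) 1 0 0 RatFunc.X).rank = 32 ∧
    (consMatrix ℚ 1 0 0 0).rank = 27 ∧
    (consMatrix ℚ 1 0 0 (-1)).rank = 27 := by
  have hX : (RatFunc.X : RatFunc ℚ) + 1 ≠ 0 := by
    have h := Polynomial.X_add_C_ne_zero (1 : ℚ)
    intro h0
    apply h
    apply RatFunc.algebraMap_injective ℚ
    simpa using h0
  have h1 := rank_generic (RatFunc.X : RatFunc ℚ) RatFunc.X_ne_zero hX
  have h2 := rank_zero
  have h3 := rank_neg_one
  exact ⟨by omega, by omega, by omega⟩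
end

section
/- Consider the one-parameter family of coefficient vectors (1,b,0,0). Over the field ℚ(t) of rational functions in one variable t, the matrix of consequences M(1,t,0,0) has rank exactly 32; moreover, over ℚ, the matrices M(1,0,0,0) and M(1,−1,0,0) each have rank exactly 27. -/
/-- 0-based version of `colP`. -/
def cP : Fin 42 → Fin 42 := ![3,7,10,12,13,0,3,7,10,12,13,0,3,7,10,12,13,0,4,8,11,14,15,1,16,23,25,26,27,6,18,28,33,35,36,9,1,6,9,2,22,32]

/-- 0-based version of `colQ`. -/
def cQ : Fin 42 → Fin 42 := ![4,8,11,14,15,1,5,17,19,20,21,3,5,17,19,20,21,3,5,17,19,20,21,3,17,24,29,30,31,7,19,29,34,37,38,10,2,16,18,4,23,33]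

lemma cP_spec : ∀ i, colP i = (cP i : ℕ) + 1 := by decide
lemma cQ_spec : ∀ i, colQ i = (cQ i : ℕ) + 1 := by decide

lemma cons_mulVec {K : Type*} [Field K] (s : K) (v : Fin 42 → K) (i : Fin 42) :
    (consMatrix K 1 (-s) 0 0).mulVec v i = v (cP i) - s * v (cQ i) := by
  simp [Matrix.mulVec, dotProduct, consMatrix, cP_spec, cQ_spec, add_mul, Finset.sum_add_distrib,
    ← Fin.ext_iff, ite_mul, sub_eq_add_neg]

/-- If the kernel of `M` is parametrised by `n` free coordinates, then `rank M + n = 42`. -/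
lemma rank_add_of_ker {K : Type*} [Field K] {n : ℕ} (M : Matrix (Fin 42) (Fin 42) K)
    (σ : Fin n → Fin 42) (r : Fin 42 → Fin n) (c : Fin 42 → K)
    (hr : ∀ i, r (σ i) = i) (hc : ∀ i, c (σ i) = 1)
    (hker : ∀ v, M.mulVec v = 0 ↔ ∀ j, v j = c j * v (σ (r j))) :
    M.rank + n = 42 := by
  let F : (Fin n → K) →ₗ[K] (Fin 42 → K) :=
    { toFun := fun w j => c j * w (r j)
      map_add' := by intro x y; ext j; simp [mul_add]
      map_smul' := by intro a x; ext j; simp [mul_left_comm] }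
  have hF : ∀ w j, F w j = c j * w (r j) := fun _ _ => rfl
  have hinj : Function.Injective F := by
    intro x y h
    ext i
    have := congrFun h (σ i)
    simpa [hF, hr, hc] using this
  have hrange : LinearMap.range F = LinearMap.ker M.mulVecLin := by
    ext v
    rw [LinearMap.mem_ker, Matrix.mulVecLin_apply, hker]
    constructor
    · rintro ⟨w, rfl⟩ j
      simp [hF, hr, hc]
    · intro h
      exact ⟨fun i => v (σ i), by ext j; rw [hF, ← h j]⟩
  have h1 := LinearMap.finrank_range_add_finrank_ker M.mulVecLin
  rw [← hrange, LinearMap.finrank_range_of_inj hinj] at h1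
  simpa [Matrix.rank] using h1

lemma ker_iff {K : Type*} [Field K] (s : K) (v : Fin 42 → K) :
    (consMatrix K 1 (-s) 0 0).mulVec v = 0 ↔ ∀ i, v (cP i) = s * v (cQ i) := by
  simp only [funext_iff, cons_mulVec, Pi.zero_apply, sub_eq_zero]

/-- The columns which are not of the form `p_i`. -/
def sinks : Fin 15 → Fin 42 := ![5,17,19,20,21,24,29,30,31,34,37,38,39,40,41]

/-- The sink reached from a column. -/
def sinkOf : Fin 42 → Fin 15 := ![0,0,0,0,0,0,1,1,1,2,2,2,3,4,3,4,1,1,2,2,3,4,5,5,5,6,7,8,6,6,7,8,9,9,9,10,11,10,11,12,13,14]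

/-- The last ten sinks (those in tree components). -/
def treeSinks : Fin 10 → Fin 42 := ![24,29,30,31,34,37,38,39,40,41]

/-- The sink reached from a column in a tree component (junk value `0` otherwise). -/
def treeSinkOf : Fin 42 → Fin 10 := ![0,0,0,0,0,0,0,0,0,0,0,0,0,0,0,0,0,0,0,0,0,0,0,0,0,1,2,3,1,1,2,3,4,4,4,5,6,5,6,7,8,9]

/-- The distance to the sink. -/
def depth : Fin 42 → ℕ := ![4,3,2,2,1,0,3,2,1,3,2,1,2,2,1,1,1,0,1,0,0,0,2,1,0,1,1,1,1,0,0,0,2,1,0,1,1,0,0,0,0,0]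

/-- Is the column in a tree component? -/
def inTree : Fin 42 → Bool := ![false,false,false,false,false,false,false,false,false,false,false,false,false,false,false,false,false,false,false,false,false,false,true,true,true,true,true,true,true,true,true,true,true,true,true,true,true,true,true,true,true,true]

/-- A row starting at the given column, if there is one. -/
def rowOf : Fin 42 → Fin 42 := ![5,23,39,0,18,0,29,1,19,35,2,20,3,4,21,22,24,0,30,0,0,0,40,25,0,26,27,28,31,0,0,0,41,32,0,33,34,0,0,0,0,0]

lemma rowOf_spec : ∀ j, j = sinks (sinkOf j) ∨
    (cP (rowOf j) = j ∧ depth (cQ (rowOf j)) < depth j) := by decide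
lemma sinkOf_row : ∀ i, sinkOf (cP i) = sinkOf (cQ i) := by decide
lemma not_sink : ∀ i, cP i ≠ sinks (sinkOf (cP i)) := by decide
lemma sinkOf_sinks : ∀ i, sinkOf (sinks i) = i := by decide
lemma treeSinkOf_sinks : ∀ i, treeSinkOf (treeSinks i) = i := by decide
lemma inTree_sinks : ∀ i, inTree (treeSinks i) = true := by decide
lemma depth_sinks : ∀ i, depth (treeSinks i) = 0 := by decide
lemma inTree_row : ∀ i, inTree (cP i) = inTree (cQ i) := by decide
lemma depth_row : ∀ i, inTree (cP i) = true → depth (cP i) = depth (cQ i) + 1 := by decide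
lemma treeSinkOf_row : ∀ i, treeSinkOf (cP i) = treeSinkOf (cQ i) := by decide
lemma treeSink_eq : ∀ j, j = sinks (sinkOf j) → inTree j = true →
    j = treeSinks (treeSinkOf j) := by decide
lemma sink_dead : ∀ j, inTree j = false → sinkOf j = 0 ∨ sinkOf j = 1 ∨ sinkOf j = 2 ∨
    sinkOf j = 3 ∨ sinkOf j = 4 := by decide

lemma dead_of {K : Type*} [Field K] {s x y z : K} (hs : s ≠ 0) (hs1 : s ≠ 1)
    (h1 : x = s * y) (h2 : x = s * z) (h3 : y = s * z) : z = 0 := by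
  have h : s * (s - 1) * z = 0 := by linear_combination -h1 + h2 - s * h3
  simpa [hs, sub_eq_zero, hs1] using h

lemma rank_idem {K : Type*} [Field K] (s : K) (hs : s * s = s) :
    (consMatrix K 1 (-s) 0 0).rank = 27 := by
  have := rank_add_of_ker (consMatrix K 1 (-s) 0 0) sinks sinkOf
    (fun j => if j = sinks (sinkOf j) then 1 else s) sinkOf_sinks
    (by intro i; simp [sinkOf_sinks]) (by
      intro v
      rw [ker_iff]
      constructor
      · intro h j
        induction hd : depth j using Nat.strong_induction_on generalizing j with
        | _ d ih =>
          by_cases hj : j = sinks (sinkOf j)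
          · rw [if_pos hj, one_mul, ← hj]
          · obtain hj' | ⟨h1, h2⟩ := rowOf_spec j
            · exact absurd hj' hj
            have e := h (rowOf j)
            have e2 := ih _ (hd ▸ h2) _ rfl
            rw [← sinkOf_row, h1] at e2
            rw [h1] at e
            rw [if_neg hj, e, e2]
            split_ifs
            · ring
            · rw [← mul_assoc, hs]
      · intro h i
        rw [h (cP i), h (cQ i), if_neg (not_sink i), sinkOf_row i]
        split_ifs
        · ring
        · rw [← mul_assoc, hs])
  omega

lemma rank_generic_s4 {K : Type*} [Field K] (s : K) (hs : s ≠ 0) (hs1 : s ≠ 1) :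
    (consMatrix K 1 (-s) 0 0).rank = 32 := by
  have := rank_add_of_ker (consMatrix K 1 (-s) 0 0) treeSinks treeSinkOf
    (fun j => if inTree j = true then s ^ depth j else 0) treeSinkOf_sinks
    (by intro i; simp [inTree_sinks, depth_sinks]) (by
      intro v
      rw [ker_iff]
      constructor
      · intro h
        have h0 : ∀ k : Fin 15, k = 0 ∨ k = 1 ∨ k = 2 ∨ k = 3 ∨ k = 4 → v (sinks k) = 0 := by
          rintro k (rfl | rfl | rfl | rfl | rfl)
          · exact dead_of hs hs1 (h 0) (h 6) (h 18)
          · exact dead_of hs hs1 (h 1) (h 7) (h 19)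
          · exact dead_of hs hs1 (h 2) (h 8) (h 20)
          · exact dead_of hs hs1 (h 3) (h 9) (h 21)
          · exact dead_of hs hs1 (h 4) (h 10) (h 22)
        intro j
        induction hd : depth j using Nat.strong_induction_on generalizing j with
        | _ d ih =>
          obtain hj | ⟨h1, h2⟩ := rowOf_spec j
          · by_cases ht : inTree j = true
            · have hj' : j = treeSinks (treeSinkOf j) := treeSink_eq j hj ht
              rw [if_pos ht, ← hj']
              have : depth j = 0 := by rw [hj', depth_sinks]
              simp [← hd, this]
            · rw [if_neg ht, zero_mul, hj]
              exact h0 _ (sink_dead j (by simpa using ht))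
          · have e := h (rowOf j)
            have e2 := ih _ (hd ▸ h2) _ rfl
            have e3 := depth_row (rowOf j)
            rw [← treeSinkOf_row, ← inTree_row, h1] at e2
            rw [h1] at e e3
            by_cases ht : inTree j = true
            · rw [if_pos ht] at e2
              rw [if_pos ht, e, e2, ← hd, e3 ht]
              ring
            · rw [if_neg ht] at e2
              rw [if_neg ht, e, e2]
              ring
      · intro h i
        rw [h (cP i), h (cQ i), ← inTree_row, ← treeSinkOf_row]
        split_ifs with ht
        · rw [depth_row i ht]; ring
        · ring)
  omega

/-- For the one-parameter family `(1,b,0,0)`: over the rational function field `ℚ(t)`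
the matrix of consequences `M(1,t,0,0)` has rank exactly 32, and over `ℚ` the matrices
`M(1,0,0,0)` and `M(1,-1,0,0)` each have rank exactly 27. -/
theorem stmt_4 :
    (consMatrix (RatFunc ℚ) 1 RatFunc.X 0 0).rank = 32 ∧
    (consMatrix ℚ 1 0 0 0).rank = 27 ∧
    (consMatrix ℚ 1 (-1) 0 0).rank = 27 := by
  refine ⟨?_, ?_, ?_⟩
  · have h := rank_generic_s4 (-RatFunc.X : RatFunc ℚ) (by simpa using RatFunc.X_ne_zero) (by
      intro h
      have h1 : (RatFunc.X : RatFunc ℚ) = algebraMap (Polynomial ℚ) _ Polynomial.X :=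
        RatFunc.algebraMap_X.symm
      have h2 : algebraMap (Polynomial ℚ) (RatFunc ℚ) Polynomial.X
          = algebraMap (Polynomial ℚ) (RatFunc ℚ) (-1) := by
        rw [← h1, map_neg, map_one, ← h, neg_neg]
      have h3 := congrArg (Polynomial.eval 0) (RatFunc.algebraMap_injective ℚ h2)
      simp at h3)
    rwa [neg_neg] at h
  · have h := rank_idem (0 : ℚ) (by simp)
    rwa [neg_zero] at h
  · exact rank_idem (1 : ℚ) (by simp)
end
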